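/- For all n, m ≥ 0 and generic tuples ū=(u_1,…,u_n), v̄=(v_1,…,v_m), the multiple action of the modified diagonal operator ν_{11} on a modified Bethe vector is ν_{11}(ū) ν_{12}(v̄) |0⟩ = β_2^n Σ_{w̄ ⇒ {w̄_I, w̄_II}} (−β_2)^{−l} λ_1(w̄_I)·\bar{K}^{(1)}_{n,l}(ū | w̄_I − c)·f(w̄_II, w̄_I)·ν_{12}(w̄_II) |0⟩, where w̄ = {ū, v̄}, the sum runs over all partitions of w̄ into two disjoint subtuples with no restriction on cardinalities, and l = #w̄_I. -/

import Mathlib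

open scoped BigOperators

noncomputable section

/-- The rational function `g(u,v) = c/(u-v)`. -/
def gC (c u v : ℂ) : ℂ := c / (u - v)

/-- The rational function `f(u,v) = (u-v+c)/(u-v)`. -/
def fC (c u v : ℂ) : ℂ := (u - v + c) / (u - v)

/-- The rational function `h(u,v) = (u-v+c)/c`. -/
def hC (c u v : ℂ) : ℂ := (u - v + c) / c

/-- A family of parameters is generic if all pairwise differences avoid `0, ±c, ±2c`. -/
def Generic (c : ℂ) {ι : Type*} (w : ι → ℂ) : Prop :=
  ∀ i j, i ≠ j → w i - w j ≠ 0 ∧ w i - w j ≠ c ∧ w i - w j ≠ -c ∧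
    w i - w j ≠ 2 * c ∧ w i - w j ≠ -2 * c

/-- The modified Izergin determinant `K^{(z)}(x̄|ȳ)`. -/
def KIz (c z : ℂ) {ι κ : Type*} [Fintype ι] [Fintype κ] [DecidableEq κ]
    (x : ι → ℂ) (y : κ → ℂ) : ℂ :=
  Matrix.det (Matrix.of fun j k : κ =>
    -z * (if j = k then 1 else 0) +
      (∏ i, fC c (x i) (y j)) * (∏ i ∈ Finset.univ.erase j, fC c (y j) (y i))
        / hC c (y j) (y k))

/-- The conjugated modified Izergin determinant: `c` is replaced by `-c`. -/
def KIzBar (c z : ℂ) {ι κ : Type*} [Fintype ι] [Fintype κ] [DecidableEq κ]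
    (x : ι → ℂ) (y : κ → ℂ) : ℂ :=
  KIz (-c) z x y

/-- Restriction of a tuple to a subtuple indexed by a `Finset`. -/
def restr {p : ℕ} (w : Fin p → ℂ) (s : Finset (Fin p)) : {x // x ∈ s} → ℂ :=
  fun i => w i.1

/-- Double product `f(w̄_s, w̄_t)` over two subtuples of a tuple. -/
def fSS (c : ℂ) {p : ℕ} (w : Fin p → ℂ) (s t : Finset (Fin p)) : ℂ :=
  ∏ i ∈ s, ∏ j ∈ t, fC c (w i) (w j)

/-- Ordered product of operators over a subtuple (the operators pairwise commute,
so the order is irrelevant). -/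
def opProd {V : Type*} [AddCommGroup V] [Module ℂ V] {p : ℕ}
    (op : ℂ → Module.End ℂ V) (w : Fin p → ℂ) (s : Finset (Fin p)) : Module.End ℂ V :=
  ((s.sort (· ≤ ·)).map (fun i => op (w i))).prod

/-- The index subsets of a partition of `Fin p` into three parts. -/
def parts {p : ℕ} (σ : Fin p → Fin 3) (k : Fin 3) : Finset (Fin p) :=
  Finset.univ.filter (fun i => σ i = k)

/-!
The action of one diagonal operator on a product of creation operators is the usual Bethe ansatz
formula with an extra term `β₂ ν₁₂(u)` coming from the modified vacuum. Iterating it, the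
coefficients of `ν₁₁(ū) ν₁₂(v̄) |0⟩` obey a recursion in `#ū`. On the other side, expanding
`K̄^{(1)}` in principal minors and evaluating each of them as a Cauchy determinant turns it into a
sum over subtuples, and partial fractions of `∏ f(x, w_i)` in `x` show that these sums obey the
same recursion.
-/

lemma gC_swap (c u v : ℂ) : gC c v u = -gC c u v := by
  rw [gC, gC, ← neg_sub u v, div_neg]

lemma fC_eq_one_add_gC (c : ℂ) {u v : ℂ} (huv : u ≠ v) : fC c u v = 1 + gC c u v := by
  rw [fC, gC, add_div, div_self (sub_ne_zero.2 huv)]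

lemma gC_mul_gC (c : ℂ) {x y z : ℂ} (hxy : x ≠ y) (hxz : x ≠ z) (hyz : y ≠ z) :
    gC c x y * gC c x z = gC c x y * gC c y z + gC c x z * gC c z y := by
  have hxy' := sub_ne_zero.2 hxy
  have hxz' := sub_ne_zero.2 hxz
  have hyz' := sub_ne_zero.2 hyz
  rw [gC_swap c y z]
  unfold gC
  field_simp
  ring

lemma fC_mul_gC_add_gC_mul_gC (c : ℂ) {x y z : ℂ} (hxy : x ≠ y) (hxz : x ≠ z) (hyz : y ≠ z) :
    fC c y x * gC c x z + gC c x y * gC c y z = fC c y z * gC c x z := by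
  rw [fC_eq_one_add_gC c hxy.symm, fC_eq_one_add_gC c hyz, gC_swap c x y]
  linear_combination -gC_mul_gC c hxy hxz hyz - gC c x z * gC_swap c y z

lemma gC_neg (c u v : ℂ) : gC (-c) u v = gC c v u := by
  rw [gC_swap c u v, gC, gC, neg_div]

lemma fC_neg (c u v : ℂ) : fC (-c) u v = fC c v u := by
  rw [fC, fC, ← neg_div_neg_eq]
  ring_nf

lemma fC_neg_sub_right (c u v : ℂ) : fC (-c) u (v - c) = (fC c u v)⁻¹ := by
  rw [fC, fC, inv_div]
  ring_nf

lemma fC_self (c u : ℂ) : fC c u u = 0 := by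
  rw [fC, sub_self, div_zero]

lemma fC_ne_zero {c u v : ℂ} (huv : u ≠ v) (huvc : u - v + c ≠ 0) : fC c u v ≠ 0 :=
  div_ne_zero huvc (sub_ne_zero.2 huv)

lemma inv_hC_sub_mul {c x y z : ℂ} (hxy : x - y + c ≠ 0) (hxz : x - z + c ≠ 0)
    (hzy : z - y + c ≠ 0) :
    (hC c x y)⁻¹ - (hC c z y)⁻¹ * (hC c x z)⁻¹
      = (fC c z y)⁻¹ * ((fC c x z)⁻¹ * (hC c x y)⁻¹) := by
  simp only [hC, fC, inv_div]
  field_simp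
  ring

section FinsetSums

variable {ι M : Type*} [AddCommMonoid M]

lemma sum_powerset_sum_sdiff [DecidableEq ι] (W : Finset ι) (F : Finset ι → ι → M) :
    ∑ T ∈ W.powerset, ∑ i ∈ W \ T, F T i = ∑ T ∈ W.powerset, ∑ i ∈ T, F (T.erase i) i := by
  rw [Finset.sum_sigma', Finset.sum_sigma']
  refine Finset.sum_bij' (fun q _ => ⟨insert q.2 q.1, q.2⟩) (fun q _ => ⟨q.1.erase q.2, q.2⟩)
    ?_ ?_ ?_ ?_ ?_ <;> rintro ⟨T, i⟩ h <;>
    simp only [Finset.mem_sigma, Finset.mem_powerset, Finset.mem_sdiff] at h ⊢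
  · exact ⟨Finset.insert_subset h.2.1 h.1, Finset.mem_insert_self _ _⟩
  · exact ⟨(Finset.erase_subset _ _).trans h.1, h.1 h.2, Finset.notMem_erase _ _⟩
  · rw [Finset.erase_insert h.2.2]
  · rw [Finset.insert_erase h.2]
  · rw [Finset.erase_insert h.2.2]

lemma sum_finset_subtype (S : Finset ι) (F : Finset ι → M) :
    ∑ T : Finset S, F (T.map (.subtype (· ∈ S))) = ∑ T ∈ S.powerset, F T := by
  classical
  refine Finset.sum_bij (fun T _ => T.map (.subtype (· ∈ S)))
    (fun T _ => Finset.mem_powerset.2 (Finset.map_subtype_subset T))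
    (fun _ _ _ _ h => Finset.map_injective _ h) (fun T hT => ?_) (fun _ _ => rfl)
  refine ⟨T.subtype (· ∈ S), Finset.mem_univ _, ?_⟩
  exact Finset.subtype_map_of_mem (Finset.mem_powerset.1 hT)

end FinsetSums

section PartialProducts

variable {p : ℕ} (c : ℂ) (w : Fin p → ℂ)

lemma fSS_singleton_singleton (i j : Fin p) : fSS c w {i} {j} = fC c (w i) (w j) := by
  simp only [fSS, Finset.prod_singleton]

lemma fSS_insert_left {a : Fin p} {s : Finset (Fin p)} (ha : a ∉ s) (t : Finset (Fin p)) :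
    fSS c w (insert a s) t = fSS c w {a} t * fSS c w s t := by
  simp only [fSS, Finset.prod_insert ha, Finset.prod_singleton]

lemma fSS_insert_right (s : Finset (Fin p)) {a : Fin p} {t : Finset (Fin p)} (ha : a ∉ t) :
    fSS c w s (insert a t) = fSS c w s {a} * fSS c w s t := by
  simp only [fSS, Finset.prod_insert ha, Finset.prod_singleton, Finset.prod_mul_distrib]

lemma fSS_singleton_mul_fSS_erase (s : Finset (Fin p)) {i : Fin p} {t : Finset (Fin p)}
    (hi : i ∈ t) : fSS c w s {i} * fSS c w s (t.erase i) = fSS c w s t := by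
  rw [← fSS_insert_right c w s (Finset.notMem_erase i t), Finset.insert_erase hi]

lemma fSS_sdiff_mul_fSS (s : Finset (Fin p)) {t r : Finset (Fin p)} (htr : t ⊆ r) :
    fSS c w s (r \ t) * fSS c w s t = fSS c w s r := by
  simp only [fSS, ← Finset.prod_mul_distrib, Finset.prod_sdiff htr]

lemma fSS_neg (s t : Finset (Fin p)) : fSS (-c) w s t = fSS c w t s := by
  simp only [fSS, fC_neg]
  exact Finset.prod_comm

lemma fSS_eq_zero {i : Fin p} {s t : Finset (Fin p)} (his : i ∈ s) (hit : i ∈ t) :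
    fSS c w s t = 0 :=
  Finset.prod_eq_zero his (Finset.prod_eq_zero hit (fC_self c (w i)))

variable {c w}

lemma fSS_ne_zero (hw : Function.Injective w) (hwc : ∀ i j, w i - w j + c ≠ 0)
    {s t : Finset (Fin p)} (hst : Disjoint s t) : fSS c w s t ≠ 0 :=
  Finset.prod_ne_zero_iff.2 fun i hi => Finset.prod_ne_zero_iff.2 fun j hj =>
    fC_ne_zero (hw.ne (Finset.disjoint_iff_ne.1 hst i hi j hj)) (hwc i j)

variable (c)

-- Partial fractions of `∏ f(x, w_i)` in `x`: simple poles at the `w_i` and value `1` at infinity.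
lemma fSS_singleton_left_eq_sum (hw : Function.Injective w) (R : Finset (Fin p)) :
    ∀ x ∉ R, fSS c w {x} R
      = 1 + ∑ i ∈ R, gC c (w x) (w i) * fSS c w {i} (R.erase i) := by
  induction R using Finset.induction_on with
  | empty => simp [fSS]
  | insert a R ha ih =>
    intro x hx
    obtain ⟨hxa, hxR⟩ : x ≠ a ∧ x ∉ R := by simpa using hx
    have merge : ∀ i ∈ R, gC c (w x) (w i) * fSS c w {i} ((insert a R).erase i)
        = (gC c (w x) (w i) + gC c (w x) (w a) * gC c (w x) (w i)
            - gC c (w x) (w a) * gC c (w a) (w i)) * fSS c w {i} (R.erase i) := by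
      intro i hi
      have hai : a ≠ i := fun h => ha (h ▸ hi)
      have hxi : x ≠ i := fun h => hxR (h ▸ hi)
      rw [Finset.erase_insert_of_ne hai, fSS_insert_right c w {i} (by simp [ha]),
        fSS_singleton_singleton, fC_eq_one_add_gC c (hw.ne hai.symm),
        gC_mul_gC c (hw.ne hxa) (hw.ne hxi) (hw.ne hai)]
      ring
    rw [fSS_insert_right c w {x} ha, Finset.sum_insert ha, Finset.erase_insert ha,
      Finset.sum_congr rfl merge, ih x hxR, ih a ha,
      fSS_singleton_singleton, fC_eq_one_add_gC c (hw.ne hxa)]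
    simp only [add_mul, sub_mul, Finset.sum_add_distrib, Finset.sum_sub_distrib, mul_assoc,
      ← Finset.mul_sum]
    ring

lemma fSS_singleton_right_eq_sum (hw : Function.Injective w) {R : Finset (Fin p)} {x : Fin p}
    (hx : x ∉ R) :
    fSS c w R {x} = 1 + ∑ i ∈ R, gC c (w i) (w x) * fSS c w (R.erase i) {i} := by
  simpa only [fSS_neg, gC_neg] using fSS_singleton_left_eq_sum (-c) hw R x hx

end PartialProducts

section IzerginSum

variable {p : ℕ} (c : ℂ) (w : Fin p → ℂ)

/-- The expansion over partitions `w̄_S ⇒ {w̄_T, w̄_{S∖T}}` of the conjugated modified Izergin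
determinant `K̄^{(1)}(w̄_U | w̄_S - c)`, see `KIzBar_eq_izerginSum`. Since `f(x, x)⁻¹` is the junk
value `0`, only the `T` disjoint from `U` contribute. -/
def izerginSum (U S : Finset (Fin p)) : ℂ :=
  ∑ T ∈ S.powerset, (-1) ^ (S \ T).card * (fSS c w U T)⁻¹ * fSS c w (S \ T) T

variable {c w}

lemma izerginSum_empty_left (hw : Function.Injective w) {S : Finset (Fin p)} (hS : S.Nonempty) :
    izerginSum c w ∅ S = 0 := by
  obtain ⟨x, hxS⟩ := hS
  obtain ⟨S, hx, rfl⟩ : ∃ S', x ∉ S' ∧ insert x S' = S :=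
    ⟨S.erase x, Finset.notMem_erase x S, Finset.insert_erase hxS⟩
  have pair : ∀ T ∈ S.powerset,
      (-1) ^ (insert x S \ T).card * (fSS c w ∅ T)⁻¹ * fSS c w (insert x S \ T) T
        + (-1) ^ (insert x S \ insert x T).card * (fSS c w ∅ (insert x T))⁻¹ *
            fSS c w (insert x S \ insert x T) (insert x T)
      = (∑ i ∈ S \ T, (-1) ^ (S \ T).card * fSS c w (S \ T) T *
            (gC c (w i) (w x) * fSS c w ((S \ T).erase i) {i}))
        - ∑ i ∈ T, (-1) ^ (S \ T).card * fSS c w (S \ T) T *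
            (gC c (w x) (w i) * fSS c w {i} (T.erase i)) := by
    intro T hT
    have hxT : x ∉ T := fun h => hx (Finset.mem_powerset.1 hT h)
    have hxST : x ∉ S \ T := fun h => hx (Finset.sdiff_subset h)
    rw [Finset.insert_sdiff_of_notMem S hxT, Finset.insert_sdiff_insert,
      Finset.sdiff_insert_of_notMem hx, fSS_insert_left c w hxST,
      fSS_insert_right c w (S \ T) hxT, Finset.card_insert_of_notMem hxST, ← Finset.mul_sum,
      ← Finset.mul_sum, fSS_singleton_left_eq_sum c hw T x hxT,
      fSS_singleton_right_eq_sum c hw hxST]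
    simp only [fSS, Finset.prod_empty, inv_one]
    ring
  rw [izerginSum, Finset.sum_powerset_insert hx, ← Finset.sum_add_distrib,
    Finset.sum_congr rfl pair, Finset.sum_sub_distrib, sum_powerset_sum_sdiff, sub_eq_zero]
  refine Finset.sum_congr rfl fun T hT => Finset.sum_congr rfl fun i hi => ?_
  have hiST : i ∉ S \ T := by simp [hi]
  rw [Finset.sdiff_erase (Finset.mem_powerset.1 hT hi), Finset.card_insert_of_notMem hiST,
    fSS_insert_left c w hiST, Finset.erase_insert hiST,
    ← fSS_singleton_mul_fSS_erase c w (S \ T) hi, gC_swap c (w x)]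
  ring

lemma izerginSum_insert_insert (hw : Function.Injective w) (hwc : ∀ i j, w i - w j + c ≠ 0)
    {a : Fin p} {U S : Finset (Fin p)} (haU : a ∉ U) (haS : a ∉ S) :
    izerginSum c w (insert a U) (insert a S) = -izerginSum c w U S := by
  have vanish : ∀ T ∈ S.powerset, (-1) ^ (insert a S \ insert a T).card *
      (fSS c w (insert a U) (insert a T))⁻¹ *
        fSS c w (insert a S \ insert a T) (insert a T) = 0 := by
    intro T _
    rw [fSS_eq_zero c w (Finset.mem_insert_self a U) (Finset.mem_insert_self a T), inv_zero,
      mul_zero, zero_mul]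
  rw [izerginSum, izerginSum, Finset.sum_powerset_insert haS, Finset.sum_eq_zero vanish,
    add_zero, ← Finset.sum_neg_distrib]
  refine Finset.sum_congr rfl fun T hT => ?_
  have haT : a ∉ T := fun h => haS (Finset.mem_powerset.1 hT h)
  have haST : a ∉ S \ T := fun h => haS (Finset.sdiff_subset h)
  have hne : fSS c w {a} T ≠ 0 := fSS_ne_zero hw hwc (Finset.disjoint_singleton_left.2 haT)
  rw [Finset.insert_sdiff_of_notMem S haT, fSS_insert_left c w haST,
    Finset.card_insert_of_notMem haST, fSS_insert_left c w haU]
  field_simp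
  ring

lemma fSS_mul_izerginSum_insert_left (hw : Function.Injective w)
    (hwc : ∀ i j, w i - w j + c ≠ 0) {a : Fin p} {U S : Finset (Fin p)} (haU : a ∉ U)
    (haS : a ∉ S) :
    fSS c w {a} S * izerginSum c w (insert a U) S
      = izerginSum c w U S - ∑ i ∈ S,
          gC c (w a) (w i) * fSS c w {i} (S.erase i) * izerginSum c w U (S.erase i) := by
  have expand : ∀ T ∈ S.powerset, fSS c w {a} S *
        ((-1) ^ (S \ T).card * (fSS c w (insert a U) T)⁻¹ * fSS c w (S \ T) T)
      = (-1) ^ (S \ T).card * (fSS c w U T)⁻¹ * fSS c w (S \ T) T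
        + ∑ i ∈ S \ T, (-1) ^ (S \ T).card * (fSS c w U T)⁻¹ * fSS c w (S \ T) T *
            (gC c (w a) (w i) * fSS c w {i} ((S \ T).erase i)) := by
    intro T hT
    rw [Finset.mem_powerset] at hT
    have haST : a ∉ S \ T := fun h => haS (Finset.sdiff_subset h)
    have hne : fSS c w {a} T ≠ 0 :=
      fSS_ne_zero hw hwc (Finset.disjoint_singleton_left.2 fun h => haS (hT h))
    rw [← Finset.mul_sum, ← mul_one_add, ← fSS_singleton_left_eq_sum c hw _ a haST,
      ← fSS_sdiff_mul_fSS c w {a} hT, fSS_insert_left c w haU]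
    field_simp
  rw [izerginSum, Finset.mul_sum, Finset.sum_congr rfl expand, Finset.sum_add_distrib,
    sub_eq_add_neg, ← Finset.sum_neg_distrib, izerginSum]
  congr 1
  rw [Finset.sum_comm' (t' := S) (s' := fun i => (S.erase i).powerset) fun T i => by
    simp only [Finset.mem_powerset, Finset.mem_sdiff, Finset.subset_erase]; tauto]
  refine Finset.sum_congr rfl fun i hi => ?_
  rw [izerginSum, Finset.mul_sum, ← Finset.sum_neg_distrib]
  refine Finset.sum_congr rfl fun T hT => ?_
  rw [Finset.mem_powerset] at hT
  have hiT : i ∉ S.erase i \ T := by simp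
  have hST : S \ T = insert i (S.erase i \ T) := by
    rw [← Finset.insert_sdiff_of_notMem _ fun h => Finset.notMem_erase i S (hT h),
      Finset.insert_erase hi]
  rw [hST, Finset.erase_insert hiT, Finset.card_insert_of_notMem hiT, fSS_insert_left c w hiT,
    ← fSS_sdiff_mul_fSS c w {i} hT]
  ring

end IzerginSum

section Determinants

variable {κ : Type*} [DecidableEq κ]

lemma det_sub_one_eq_sum_minors [Fintype κ] {R : Type*} [CommRing R] (M : Matrix κ κ R) :
    (M - 1).det
      = ∑ T : Finset κ, (-1) ^ Tᶜ.card * (M.submatrix ((↑) : T → κ) ((↑) : T → κ)).det := by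
  have scale_rows : ∀ T : Finset κ, T.piecewise M.row (-(1 : Matrix κ κ R)).row
      = fun i => (if i ∈ T then (1 : R) else -1) •
        T.piecewise M.row (1 : Matrix κ κ R).row i := by
    intro T
    funext i
    by_cases hi : i ∈ T
    · simp [hi]
    · rw [Finset.piecewise_eq_of_notMem _ _ _ hi, Finset.piecewise_eq_of_notMem _ _ _ hi,
        if_neg hi, neg_one_smul]
      rfl
  rw [sub_eq_add_neg]
  refine (Matrix.detRowAlternating.map_add_univ M.row (-(1 : Matrix κ κ R)).row).trans
    (Finset.sum_congr rfl fun T _ => ?_)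
  rw [← Matrix.det_piecewise_one_eq_submatrix_det, scale_rows]
  refine (AlternatingMap.map_smul_univ _ _ _).trans ?_
  congr 1
  rw [Finset.prod_ite, Finset.prod_const_one, one_mul, Finset.prod_const,
    Finset.filter_notMem_eq_sdiff, Finset.compl_eq_univ_sdiff]

-- Cauchy's determinant, by taking the Schur complement of a diagonal entry `1 / h(y, y) = 1`.
lemma det_inv_hC {c : ℂ} {y : κ → ℂ} (hyc : ∀ i j, y i - y j + c ≠ 0) (T : Finset κ) :
    (Matrix.of fun j k : T => (hC c (y k) (y j))⁻¹).det
      = ∏ j ∈ T, ∏ k ∈ T.erase j, (fC c (y k) (y j))⁻¹ := by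
  induction T using Finset.induction_on with
  | empty => simp
  | insert a T ha ih =>
    let e := (Equiv.optionEquivSumPUnit.{0} T).symm.trans (Finset.subtypeInsertEquivOption ha).symm
    have blocks : (Matrix.of fun j k : ↥(insert a T) => (hC c (y k) (y j))⁻¹).submatrix e e
        = Matrix.fromBlocks (Matrix.of fun j k : T => (hC c (y k) (y j))⁻¹)
          (Matrix.of fun j _ => (hC c (y a) (y j))⁻¹)
          (Matrix.of fun _ k => (hC c (y k) (y a))⁻¹) 1 := by
      have hc : c ≠ 0 := by simpa using hyc a a
      ext (i | i) (j | j) <;> simp [e, hC, hc, Finset.subtypeInsertEquivOption]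
    have schur : (Matrix.of fun j k : T => (hC c (y k) (y j))⁻¹)
          - (Matrix.of fun (j : T) (_ : PUnit) => (hC c (y a) (y j))⁻¹)
            * (Matrix.of fun (_ : PUnit) (k : T) => (hC c (y k) (y a))⁻¹)
        = Matrix.of fun j k : T => (fC c (y a) (y j))⁻¹ *
            (Matrix.of fun j k : T => (fC c (y k) (y a))⁻¹ *
              (Matrix.of fun j k : T => (hC c (y k) (y j))⁻¹) j k) j k := by
      ext j k
      simpa [Matrix.mul_apply] using inv_hC_sub_mul (hyc k j) (hyc k a) (hyc a j)
    have rows : ∀ j ∈ T, ∏ k ∈ (insert a T).erase j, (fC c (y k) (y j))⁻¹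
        = (fC c (y a) (y j))⁻¹ * ∏ k ∈ T.erase j, (fC c (y k) (y j))⁻¹ := by
      intro j hj
      rw [Finset.erase_insert_of_ne (ne_of_mem_of_not_mem hj ha).symm,
        Finset.prod_insert fun h => ha (Finset.erase_subset j T h)]
    rw [← Matrix.det_submatrix_equiv_self e, blocks, Matrix.det_fromBlocks_one₂₂, schur,
      Matrix.det_mul_column, Matrix.det_mul_row, ih, Finset.prod_insert ha,
      Finset.erase_insert ha, Finset.prod_congr rfl rows, Finset.prod_mul_distrib,
      Finset.prod_coe_sort T fun j => (fC c (y a) (y j))⁻¹,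
      Finset.prod_coe_sort T fun k => (fC c (y k) (y a))⁻¹]
    ring

lemma prod_fC_erase_mul_prod_inv [Fintype κ] {c : ℂ} {y : κ → ℂ} (hy : Function.Injective y)
    (hyc : ∀ i j, y i - y j + c ≠ 0) {j : κ} {T : Finset κ} (hj : j ∈ T) :
    (∏ i ∈ Finset.univ.erase j, fC c (y i) (y j)) * ∏ k ∈ T.erase j, (fC c (y k) (y j))⁻¹
      = ∏ i ∈ Tᶜ, fC c (y i) (y j) := by
  have hne : ∏ k ∈ T.erase j, fC c (y k) (y j) ≠ 0 := Finset.prod_ne_zero_iff.2 fun k hk =>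
    fC_ne_zero (hy.ne (Finset.ne_of_mem_erase hk)) (hyc k j)
  have hcompl : Finset.univ.erase j \ T.erase j = Tᶜ := by
    rw [← Finset.erase_sdiff_distrib, ← Finset.compl_eq_univ_sdiff,
      Finset.erase_eq_of_notMem (by simpa using hj)]
  rw [← Finset.prod_sdiff (Finset.erase_subset_erase j T.subset_univ), hcompl,
    Finset.prod_inv_distrib, mul_assoc, mul_inv_cancel₀ hne, mul_one]

lemma KIzBar_one_sub_eq_sum [Fintype κ] {ι : Type*} [Fintype ι] {c : ℂ} {y : κ → ℂ} (x : ι → ℂ)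
    (hy : Function.Injective y) (hyc : ∀ i j, y i - y j + c ≠ 0) :
    KIzBar c 1 x (fun j => y j - c) = ∑ T : Finset κ, (-1) ^ Tᶜ.card *
      (∏ i, ∏ j ∈ T, fC c (x i) (y j))⁻¹ * ∏ i ∈ Tᶜ, ∏ j ∈ T, fC c (y i) (y j) := by
  set α : κ → ℂ := fun j =>
    (∏ i, (fC c (x i) (y j))⁻¹) * ∏ i ∈ Finset.univ.erase j, fC c (y i) (y j) with hα
  have matrix_eq : KIzBar c 1 x (fun j => y j - c)
      = ((Matrix.of fun j k => α j * (hC c (y k) (y j))⁻¹) - 1).det := by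
    rw [KIzBar, KIz]
    congr 1
    ext j k
    have hf : ∏ i ∈ Finset.univ.erase j, fC (-c) (y j - c) (y i - c)
        = ∏ i ∈ Finset.univ.erase j, fC c (y i) (y j) :=
      Finset.prod_congr rfl fun i _ => by rw [fC_neg, fC, fC, sub_sub_sub_cancel_right]
    have hh : hC (-c) (y j - c) (y k - c) = hC c (y k) (y j) := by
      rw [hC, hC, ← neg_div_neg_eq]
      ring_nf
    simp only [Matrix.of_apply, Matrix.sub_apply, Matrix.one_apply]
    rw [hf, hh]
    simp only [fC_neg_sub_right, hα]
    ring
  rw [matrix_eq, det_sub_one_eq_sum_minors]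
  refine Finset.sum_congr rfl fun T _ => ?_
  have minor : (Matrix.of fun j k => α j * (hC c (y k) (y j))⁻¹).submatrix
      ((↑) : T → κ) ((↑) : T → κ)
      = Matrix.of fun j k : T => α j * (Matrix.of fun j k : T => (hC c (y k) (y j))⁻¹) j k := rfl
  rw [minor, Matrix.det_mul_column, det_inv_hC hyc, Finset.prod_coe_sort T α,
    ← Finset.prod_mul_distrib, mul_assoc, Finset.prod_comm (s := Finset.univ),
    Finset.prod_comm (s := Tᶜ), ← Finset.prod_inv_distrib, ← Finset.prod_mul_distrib]
  congr 1
  refine Finset.prod_congr rfl fun j hj => ?_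
  rw [hα, mul_assoc, prod_fC_erase_mul_prod_inv hy hyc hj, Finset.prod_inv_distrib]

end Determinants

lemma KIzBar_eq_izerginSum {p : ℕ} {c : ℂ} {w : Fin p → ℂ} (hw : Function.Injective w)
    (hwc : ∀ i j, w i - w j + c ≠ 0) {n : ℕ} (e : Fin n ↪ Fin p) (S : Finset (Fin p)) :
    KIzBar c 1 (w ∘ e) (fun i => restr w S i - c) = izerginSum c w (Finset.univ.map e) S := by
  have compl_map : ∀ T : Finset S, S \ T.map (.subtype (· ∈ S)) = Tᶜ.map (.subtype (· ∈ S)) :=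
    fun T => by
      rw [Finset.compl_eq_univ_sdiff, Finset.map_sdiff, Finset.univ_eq_attach,
        Finset.attach_map_val]
  rw [KIzBar_one_sub_eq_sum (y := restr w S) (w ∘ e) (hw.comp Subtype.val_injective)
      fun i j => hwc i j, izerginSum, ← sum_finset_subtype]
  refine Finset.sum_congr rfl fun T _ => ?_
  simp only [compl_map, fSS, Finset.card_map, Finset.prod_map]
  rfl

section ActionCoefficients

variable {p : ℕ}

/-- The coefficient of `∏ B(w̄_{W∖s}) |0⟩` in `∏ A(w̄_U) ∏ B(w̄_{W∖U}) |0⟩`, where `A = ν₁₁` and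
`B = ν₁₂` in the notation of the paper. -/
def actionCoeff (c β : ℂ) (lam : ℂ → ℂ) (w : Fin p → ℂ) (U W s : Finset (Fin p)) : ℂ :=
  β ^ U.card *
    ((-β)⁻¹ ^ s.card * (∏ i ∈ s, lam (w i)) * izerginSum c w U s * fSS c w (W \ s) s)

variable {c β : ℂ} {w : Fin p → ℂ} {U W s : Finset (Fin p)} {a : Fin p}

lemma actionCoeff_erase_mul (hβ : β ≠ 0) (lam : ℂ → ℂ) (U : Finset (Fin p)) {i : Fin p}
    (hi : i ∈ s) (hs : s ⊆ W) :
    actionCoeff c β lam w U W (s.erase i) * (lam (w i) * fSS c w (W \ s) {i})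
      = -(β * β ^ U.card * ((-β)⁻¹ ^ s.card * (∏ j ∈ s, lam (w j)) * fSS c w (W \ s) s) *
          (fSS c w {i} (s.erase i) * izerginSum c w U (s.erase i))) := by
  have hiWs : i ∉ W \ s := by simp [hi]
  have hpow : (-β)⁻¹ ^ (s.erase i).card = -β * (-β)⁻¹ ^ s.card := by
    rw [← Finset.card_erase_add_one hi, pow_succ', mul_inv_cancel_left₀ (neg_ne_zero.2 hβ)]
  rw [actionCoeff, Finset.sdiff_erase (hs hi), fSS_insert_left c w hiWs, hpow,
    ← Finset.mul_prod_erase s _ hi, ← fSS_singleton_mul_fSS_erase c w (W \ s) hi]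
  ring

lemma actionCoeff_insert_of_notMem (hβ : β ≠ 0) (lam : ℂ → ℂ) (hw : Function.Injective w)
    (hwc : ∀ i j, w i - w j + c ≠ 0) (haU : a ∉ U) (haW : a ∉ W) (hs : s ⊆ W) :
    actionCoeff c β lam w (insert a U) (insert a W) s
      = β * actionCoeff c β lam w U W s
        + ∑ i ∈ s, actionCoeff c β lam w U W (s.erase i) *
            (gC c (w a) (w i) * lam (w i) * fSS c w (W \ s) {i}) := by
  have terms : ∀ i ∈ s, actionCoeff c β lam w U W (s.erase i) *
        (gC c (w a) (w i) * lam (w i) * fSS c w (W \ s) {i})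
      = -(β * β ^ U.card * ((-β)⁻¹ ^ s.card * (∏ j ∈ s, lam (w j)) * fSS c w (W \ s) s)) *
          (gC c (w a) (w i) * fSS c w {i} (s.erase i) * izerginSum c w U (s.erase i)) := by
    intro i hi
    linear_combination gC c (w a) (w i) * actionCoeff_erase_mul hβ lam U hi hs
  have has : a ∉ s := fun h => haW (hs h)
  rw [Finset.sum_congr rfl terms, ← Finset.mul_sum, actionCoeff, actionCoeff,
    Finset.card_insert_of_notMem haU, Finset.insert_sdiff_of_notMem W has,
    fSS_insert_left c w fun h => haW (Finset.sdiff_subset h)]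
  linear_combination β * β ^ U.card *
    ((-β)⁻¹ ^ s.card * (∏ j ∈ s, lam (w j)) * fSS c w (W \ s) s) *
    fSS_mul_izerginSum_insert_left hw hwc haU has

lemma actionCoeff_insert_insert (hβ : β ≠ 0) (lam : ℂ → ℂ) (hw : Function.Injective w)
    (hwc : ∀ i j, w i - w j + c ≠ 0) (haU : a ∉ U) (haW : a ∉ W) (hs : s ⊆ W) :
    actionCoeff c β lam w (insert a U) (insert a W) (insert a s)
      = actionCoeff c β lam w U W s * (lam (w a) * fSS c w (W \ s) {a}) := by
  have has : a ∉ s := fun h => haW (hs h)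
  rw [actionCoeff, actionCoeff, Finset.insert_sdiff_insert, Finset.sdiff_insert_of_notMem haW,
    fSS_insert_right c w (W \ s) has, izerginSum_insert_insert hw hwc haU has,
    Finset.card_insert_of_notMem haU, Finset.card_insert_of_notMem has, Finset.prod_insert has]
  have hinv : β * (-β)⁻¹ = -1 := by field_simp
  rw [pow_succ, pow_succ]
  linear_combination -(β ^ U.card * (-β)⁻¹ ^ s.card * (lam (w a) * ∏ i ∈ s, lam (w i)) *
    izerginSum c w U s * fSS c w (W \ s) {a} * fSS c w (W \ s) s) * hinv

lemma actionCoeff_empty_left (c β : ℂ) (lam : ℂ → ℂ) (hw : Function.Injective w)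
    (W s : Finset (Fin p)) : actionCoeff c β lam w ∅ W s = if s = ∅ then 1 else 0 := by
  split_ifs with hs
  · simp [hs, actionCoeff, izerginSum, fSS]
  · simp [actionCoeff, izerginSum_empty_left hw (Finset.nonempty_iff_ne_empty.2 hs)]

end ActionCoefficients

section OperatorProducts

variable {V : Type*} [AddCommGroup V] [Module ℂ V] {p : ℕ} {op : ℂ → Module.End ℂ V}

lemma opProd_empty (op : ℂ → Module.End ℂ V) (w : Fin p → ℂ) : opProd op w ∅ = 1 := by
  simp [opProd]

lemma opProd_insert (hop : ∀ x y, Commute (op x) (op y)) (w : Fin p → ℂ) {a : Fin p}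
    {s : Finset (Fin p)} (ha : a ∉ s) : opProd op w (insert a s) = op (w a) * opProd op w s := by
  have perm : ((insert a s).sort (· ≤ ·)).Perm (a :: s.sort (· ≤ ·)) := by
    rw [← Multiset.coe_eq_coe, ← Multiset.cons_coe, Finset.sort_eq, Finset.sort_eq,
      Finset.insert_val_of_notMem ha]
  rw [opProd, opProd, ← List.prod_cons, ← List.map_cons (f := fun i => op (w i))]
  exact (perm.map _).prod_eq' (List.pairwise_map.2 (List.pairwise_of_forall fun _ _ => hop _ _))

lemma opProd_comp (hop : ∀ x y, Commute (op x) (op y)) (w : Fin p → ℂ) {q : ℕ}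
    (e : Fin q ↪ Fin p) (s : Finset (Fin q)) : opProd op (w ∘ e) s = opProd op w (s.map e) := by
  induction s using Finset.induction_on with
  | empty => simp only [Finset.map_empty, opProd_empty]
  | insert a s ha ih =>
    rw [Finset.map_insert, opProd_insert hop _ ha, opProd_insert hop _ (by simpa using ha), ih,
      Function.comp_apply]

end OperatorProducts

lemma exchange_of_commutator {E : Type*} [Ring E] [Module ℂ E] {c : ℂ} {A B : ℂ → E}
    (hBA : ∀ x y, x ≠ y → B x * A y - A y * B x = gC c x y • (B y * A x - B x * A y))
    (x y : ℂ) (hxy : x ≠ y) :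
    A x * B y = fC c y x • (B y * A x) + gC c x y • (B x * A y) := by
  rw [← sub_eq_iff_eq_add'.2 (sub_eq_iff_eq_add.1 (hBA y x hxy.symm)),
    fC_eq_one_add_gC c hxy.symm, gC_swap c y x]
  module

/-- The relations used by the Bethe ansatz for a modified diagonal operator `A` (`ν₁₁` in the
paper) and the creation operator `B` (`ν₁₂`): the vacuum is an eigenvector of `A(x) - β B(x)`
rather than of `A(x)`. -/
structure ModifiedBethePair {V : Type*} [AddCommGroup V] [Module ℂ V] (c β : ℂ) (lam : ℂ → ℂ)
    (vac : V) (A B : ℂ → Module.End ℂ V) : Prop where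
  exchange : ∀ x y, x ≠ y → A x * B y = fC c y x • (B y * A x) + gC c x y • (B x * A y)
  commute_diag : ∀ x y, Commute (A x) (A y)
  commute_creation : ∀ x y, Commute (B x) (B y)
  diag_vac : ∀ x, A x vac = lam x • vac + β • B x vac

namespace ModifiedBethePair

variable {V : Type*} [AddCommGroup V] [Module ℂ V] {p : ℕ} {c β : ℂ} {lam : ℂ → ℂ} {vac : V}
  {A B : ℂ → Module.End ℂ V} {w : Fin p → ℂ}

lemma opProd_creation_insert_apply (h : ModifiedBethePair c β lam vac A B) {x : Fin p}
    {s : Finset (Fin p)} (hx : x ∉ s) :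
    opProd B w (insert x s) vac = B (w x) (opProd B w s vac) := by
  rw [opProd_insert h.commute_creation w hx, Module.End.mul_apply]

lemma creation_apply_opProd_insert (h : ModifiedBethePair c β lam vac A B) {x a : Fin p}
    {s : Finset (Fin p)} (hxa : x ≠ a) (hx : x ∉ s) :
    B (w x) (opProd B w (insert a s) vac) = opProd B w (insert x (insert a s)) vac :=
  (h.opProd_creation_insert_apply (by simp [hxa, hx])).symm

lemma fC_smul_creation_add_gC_smul_creation (h : ModifiedBethePair c β lam vac A B)
    (hw : Function.Injective w) {x a i : Fin p} {s : Finset (Fin p)} (hxa : x ≠ a) (hxi : x ≠ i)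
    (hai : a ≠ i) (hx : x ∉ s) (ha : a ∉ s) :
    fC c (w a) (w x) •
          B (w a) ((gC c (w x) (w i) * lam (w i) * fSS c w s {i}) • opProd B w (insert x s) vac)
        + gC c (w x) (w a) •
          B (w x) ((gC c (w a) (w i) * lam (w i) * fSS c w s {i}) • opProd B w (insert a s) vac)
      = (gC c (w x) (w i) * lam (w i) * fSS c w (insert a s) {i}) •
          opProd B w (insert x (insert a s)) vac := by
  rw [map_smul, map_smul, h.creation_apply_opProd_insert hxa hx,
    h.creation_apply_opProd_insert hxa.symm ha, Finset.insert_comm a x, fSS_insert_left c w ha,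
    fSS_singleton_singleton]
  match_scalars
  linear_combination (lam (w i) * fSS c w s {i}) *
    fC_mul_gC_add_gC_mul_gC c (hw.ne hxa) (hw.ne hxi) (hw.ne hai)

lemma diag_apply_opProd (h : ModifiedBethePair c β lam vac A B) (hw : Function.Injective w)
    (R : Finset (Fin p)) : ∀ x ∉ R, A (w x) (opProd B w R vac)
      = β • opProd B w (insert x R) vac + (lam (w x) * fSS c w R {x}) • opProd B w R vac
        + ∑ i ∈ R, (gC c (w x) (w i) * lam (w i) * fSS c w (R.erase i) {i}) •
            opProd B w (insert x (R.erase i)) vac := by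
  induction R using Finset.induction_on with
  | empty =>
    intro x hx
    rw [h.opProd_creation_insert_apply hx]
    simp [opProd_empty, h.diag_vac, fSS, add_comm]
  | insert a R ha ih =>
    intro x hx
    obtain ⟨hxa, hxR⟩ : x ≠ a ∧ x ∉ R := by simpa using hx
    have exchange_apply : A (w x) (B (w a) (opProd B w R vac))
        = fC c (w a) (w x) • B (w a) (A (w x) (opProd B w R vac))
          + gC c (w x) (w a) • B (w x) (A (w a) (opProd B w R vac)) :=
      LinearMap.congr_fun (h.exchange _ _ (hw.ne hxa)) _
    have merge : ∀ i ∈ R, (gC c (w x) (w i) * lam (w i) *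
          fSS c w ((insert a R).erase i) {i}) • opProd B w (insert x ((insert a R).erase i)) vac
        = fC c (w a) (w x) • B (w a) ((gC c (w x) (w i) * lam (w i) *
            fSS c w (R.erase i) {i}) • opProd B w (insert x (R.erase i)) vac)
          + gC c (w x) (w a) • B (w x) ((gC c (w a) (w i) * lam (w i) *
            fSS c w (R.erase i) {i}) • opProd B w (insert a (R.erase i)) vac) := by
      intro i hi
      have hai : a ≠ i := (ne_of_mem_of_not_mem hi ha).symm
      have hxi : x ≠ i := (ne_of_mem_of_not_mem hi hxR).symm
      rw [Finset.erase_insert_of_ne hai, h.fC_smul_creation_add_gC_smul_creation hw hxa hxi hai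
        (by simp [hxR]) (by simp [ha])]
    rw [h.opProd_creation_insert_apply ha, exchange_apply, ih x hxR, ih a ha,
      Finset.sum_insert ha, Finset.erase_insert ha, Finset.sum_congr rfl merge,
      Finset.sum_add_distrib, fSS_insert_left c w ha, fSS_singleton_singleton]
    simp only [map_add, map_sum, map_smul, ← Finset.smul_sum, smul_add,
      h.creation_apply_opProd_insert hxa hxR, h.creation_apply_opProd_insert hxa.symm ha,
      ← h.opProd_creation_insert_apply ha, ← h.opProd_creation_insert_apply hxR,
      Finset.insert_comm a x]
    rw [fC_eq_one_add_gC c (hw.ne hxa.symm), gC_swap c (w x) (w a)]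
    module

theorem opProd_diag_apply_opProd_creation (h : ModifiedBethePair c β lam vac A B) (hβ : β ≠ 0)
    (hw : Function.Injective w) (hwc : ∀ i j, w i - w j + c ≠ 0) {U R : Finset (Fin p)}
    (hUR : Disjoint U R) :
    opProd A w U (opProd B w R vac)
      = ∑ s ∈ (U ∪ R).powerset,
          actionCoeff c β lam w U (U ∪ R) s • opProd B w ((U ∪ R) \ s) vac := by
  induction U using Finset.induction_on with
  | empty => simp [actionCoeff_empty_left c β lam hw, opProd_empty, ite_smul]
  | insert a U ha ih =>
    rw [Finset.disjoint_insert_left] at hUR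
    have haW : a ∉ U ∪ R := by simp [ha, hUR.1]
    rw [opProd_insert h.commute_diag w ha, Module.End.mul_apply, ih hUR.2, Finset.insert_union]
    generalize U ∪ R = W at haW
    have diag_apply_term : ∀ s ∈ W.powerset,
        A (w a) (actionCoeff c β lam w U W s • opProd B w (W \ s) vac)
        = (β * actionCoeff c β lam w U W s) • opProd B w (insert a (W \ s)) vac
          + actionCoeff c β lam w (insert a U) (insert a W) (insert a s) • opProd B w (W \ s) vac
          + ∑ i ∈ W \ s, (actionCoeff c β lam w U W s * (gC c (w a) (w i) * lam (w i) *
              fSS c w ((W \ s).erase i) {i})) • opProd B w (insert a ((W \ s).erase i)) vac := by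
      intro s hs
      rw [map_smul, h.diag_apply_opProd hw (W \ s) a fun h => haW (Finset.sdiff_subset h),
        actionCoeff_insert_insert hβ lam hw hwc ha haW (Finset.mem_powerset.1 hs)]
      simp only [smul_add, Finset.smul_sum, smul_smul, mul_comm β]
    rw [map_sum, Finset.sum_congr rfl diag_apply_term, Finset.sum_add_distrib,
      Finset.sum_add_distrib, sum_powerset_sum_sdiff, add_right_comm, ← Finset.sum_add_distrib,
      Finset.sum_powerset_insert haW]
    congr 1
    · refine Finset.sum_congr rfl fun s hs => ?_
      rw [Finset.mem_powerset] at hs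
      have erase_sdiff_erase : ∀ i ∈ s, (W \ s.erase i).erase i = W \ s := fun i hi => by
        rw [← Finset.sdiff_insert, Finset.insert_erase hi]
      rw [actionCoeff_insert_of_notMem hβ lam hw hwc ha haW hs,
        Finset.insert_sdiff_of_notMem W fun h => haW (hs h), add_smul, Finset.sum_smul]
      congr 1
      exact Finset.sum_congr rfl fun i hi => by rw [erase_sdiff_erase i hi]
    · refine Finset.sum_congr rfl fun s _ => ?_
      rw [Finset.insert_sdiff_insert, Finset.sdiff_insert_of_notMem haW]

end ModifiedBethePair

lemma isCompl_map_castAddEmb_map_natAddEmb (n m : ℕ) :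
    IsCompl (Finset.univ.map (Fin.castAddEmb m : Fin n ↪ Fin (n + m)))
      (Finset.univ.map (Fin.natAddEmb n)) := by
  constructor
  · rw [Finset.disjoint_left]
    intro i
    induction i using Fin.addCases <;> simp [Fin.ext_iff] <;> omega
  · refine codisjoint_iff.2 (Finset.eq_univ_of_forall fun i => ?_)
    induction i using Fin.addCases <;> simp

namespace Generic

variable {c : ℂ} {ι : Type*} {w : ι → ℂ}

lemma injective (h : Generic c w) : Function.Injective w := fun i j hij =>
  by_contra fun hne => (h i j hne).1 (sub_eq_zero.2 hij)

lemma sub_add_ne_zero (h : Generic c w) (hc : c ≠ 0) (i j : ι) : w i - w j + c ≠ 0 := by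
  rcases eq_or_ne i j with rfl | hij
  · simpa using hc
  · exact fun h0 => (h i j hij).2.2.1 (eq_neg_of_add_eq_zero_left h0)

end Generic

theorem stmt2_general {V : Type*} [AddCommGroup V] [Module ℂ V] {c β : ℂ} {lam : ℂ → ℂ} {vac : V}
    {A B : ℂ → Module.End ℂ V} (h : ModifiedBethePair c β lam vac A B) (hβ : β ≠ 0) {n m : ℕ}
    (u : Fin n → ℂ) (v : Fin m → ℂ) (hw : Function.Injective (Fin.append u v))
    (hwc : ∀ i j, Fin.append u v i - Fin.append u v j + c ≠ 0) :
    (opProd A u Finset.univ * opProd B v Finset.univ) vac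
      = β ^ n • ∑ s : Finset (Fin (n + m)),
          ((-β) ^ (-(s.card : ℤ)) * (∏ i ∈ s, lam (Fin.append u v i)) *
              KIzBar c 1 u (fun i => restr (Fin.append u v) s i - c) *
              fSS c (Fin.append u v) sᶜ s) • opProd B (Fin.append u v) sᶜ vac := by
  set w := Fin.append u v with hwdef
  have hu : u = w ∘ Fin.castAddEmb m := by ext i; simp [hwdef]
  have hv : v = w ∘ Fin.natAddEmb n := by ext i; simp [hwdef]
  have hcompl := isCompl_map_castAddEmb_map_natAddEmb n m
  have hunion := hcompl.sup_eq_top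
  rw [Finset.sup_eq_union, Finset.top_eq_univ] at hunion
  rw [hu, hv, opProd_comp h.commute_diag, opProd_comp h.commute_creation, Module.End.mul_apply,
    h.opProd_diag_apply_opProd_creation hβ hw hwc hcompl.disjoint, hunion, Finset.powerset_univ,
    Finset.smul_sum]
  refine Finset.sum_congr rfl fun s _ => ?_
  rw [KIzBar_eq_izerginSum hw hwc, actionCoeff, Finset.card_map, Finset.card_fin,
    ← Finset.compl_eq_univ_sdiff, smul_smul, zpow_neg, zpow_natCast, inv_pow]

/-- Multiple action of the modified diagonal operator `ν₁₁` on a modified Bethe vector. -/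
theorem stmt2
    (c : ℂ) (hc : c ≠ 0) (β1 β2 : ℂ) (hβ1 : β1 ≠ 0) (hβ2 : β2 ≠ 0)
    (V : Type*) [AddCommGroup V] [Module ℂ V]
    (N : Fin 2 → Fin 2 → ℂ → Module.End ℂ V)
    (vac : V) (lam1 lam2 : ℂ → ℂ)
    (hYang : ∀ (i j k l : Fin 2) (x y : ℂ), x ≠ y →
      N i j x * N k l y - N k l y * N i j x
        = gC c x y • (N k j y * N i l x - N k j x * N i l y))
    (hCommSame : ∀ (i j : Fin 2) (x y : ℂ), N i j x * N i j y = N i j y * N i j x)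
    (hvac11 : ∀ x : ℂ, N 0 0 x vac = lam1 x • vac + β2 • (N 0 1 x vac))
    (hvac22 : ∀ x : ℂ, N 1 1 x vac = lam2 x • vac + β1 • (N 0 1 x vac))
    (hvac21 : ∀ x : ℂ, N 1 0 x vac
      = (β1 * lam1 x + β2 * lam2 x) • vac + (β1 * β2) • (N 0 1 x vac))
    (n m : ℕ) (u : Fin n → ℂ) (v : Fin m → ℂ)
    (hgen : Generic c (Fin.append u v)) :
    (opProd (N 0 0) u Finset.univ * opProd (N 0 1) v Finset.univ) vac
      = β2 ^ n • ∑ s : Finset (Fin (n + m)),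
          ((-β2) ^ (-(s.card : ℤ)) *
              (∏ i ∈ s, lam1 (Fin.append u v i)) *
              KIzBar c 1 u (fun i => restr (Fin.append u v) s i - c) *
              fSS c (Fin.append u v) sᶜ s) •
            (opProd (N 0 1) (Fin.append u v) sᶜ vac) := by
  exact stmt2_general ⟨exchange_of_commutator (hYang 0 1 0 0), hCommSame 0 0, hCommSame 0 1, hvac11⟩
    hβ2 u v hgen.injective (hgen.sub_add_ne_zero hc)
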